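/- arXiv:2205.06412 — 3 statements merged into one kernel-verified Lean document; each statement's English description precedes it below -/
import Mathlib

section
/- Fix K ≥ 1, channel matrices H_k ∈ ℂ^{n_k×n_t} (k = 1,…,K) and G ∈ ℂ^{n_e×n_t}, a power budget P ≥ 0, and nonnegative weights w_1,…,w_K. For a permutation σ of {1,…,K}, let φ_σ be the supremum of the weighted secrecy sum rate Σ_{k=1}^K w_{σ_k} R_{σ_k} over all K-tuples (Q_1,…,Q_K) of Hermitian positive semidefinite n_t×n_t complex matrices satisfying Σ_{k=1}^K tr(Q_k) ≤ P and R_{σ_k} ≥ 0 for every k. If π* is a permutation such that w_{π*_1} ≥ w_{π*_2} ≥ … ≥ w_{π*_K}, then φ_σ ≤ φ_{π*} for every permutation σ; i.e., the descending-weight encoding order maximizes the weighted secrecy sum rate. -/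
/-!
Write `I M X = log det (1 + M X)`, where `M` is the Gram matrix `Hᴴ H` of a channel `H`. The user
who raises the accumulated covariance from `S` to `T` has secrecy rate
`(I M T - I M S) - (I E T - I E S)`, with `E` the Gram matrix of the eavesdropper.

The key fact concerns covariances `S ≤ A ≤ T` and a channel `B`: there is an `S ≤ A' ≤ T` for
which `D M = I M A + I M A' - I M T - I M S` is smallest, among all channels `M`, at `M = B`. The
chain rule for `I` reduces this to `S = 0`. Then `A'` is chosen such that the matrices
`mmse B X = (X⁻¹ + B)⁻¹` satisfy `mmse B A + mmse B A' = mmse B T`. Since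
`det (1 + M X) / det (1 + B X) = det (1 + (M - B) mmse B X)`, the inequality `D B ≤ D M` becomes
`det (1 + Z (p + q)) ≤ det (1 + Z p) det (1 + Z q)` for `Z = M - B`, `p = mmse B A` and
`q = mmse B A'`, which is Fischer's inequality for a positive definite block matrix.

If a user `a` is encoded directly before a user `b` and `w a ≤ w b`, exchanging the two while
replacing the intermediate covariance `A` by `A'` for the channel `M b` changes the weighted sum
rate by `(w b - w a) (D E - D (M b)) + w a (D (M a) - D (M b)) ≥ 0`, so sorting the users by
descending weight does not lower it. The exchange may create negative rates. They are removed from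
the last user to the first, by reflecting in the channel `E`. Finally, all rates are bounded under
the power constraint, so the suprema are those of sets bounded above.
-/

open Matrix Finset ComplexOrder

/-- `log det(I + B)` for a complex square matrix `B` (real part of the determinant,
which is real when `B` is positive semidefinite). -/
noncomputable def logdetI {m : ℕ} (B : Matrix (Fin m) (Fin m) ℂ) : ℝ :=
  Real.log ((1 + B).det.re)

/-- Secrecy rate of the user at position `k` under encoding order `π`. -/
noncomputable def secrecyRate {K nt ne : ℕ} {n : Fin K → ℕ}
    (H : ∀ k : Fin K, Matrix (Fin (n k)) (Fin nt) ℂ)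
    (G : Matrix (Fin ne) (Fin nt) ℂ) (π : Equiv.Perm (Fin K))
    (Q : Fin K → Matrix (Fin nt) (Fin nt) ℂ) (k : Fin K) : ℝ :=
  logdetI (H (π k) * (∑ j ∈ Finset.univ.filter (fun j => k ≤ j), Q (π j)) * (H (π k))ᴴ)
    - logdetI (H (π k) * (∑ j ∈ Finset.univ.filter (fun j => k < j), Q (π j)) * (H (π k))ᴴ)
    - logdetI (G * (∑ j ∈ Finset.univ.filter (fun j => k ≤ j), Q (π j)) * Gᴴ)
    + logdetI (G * (∑ j ∈ Finset.univ.filter (fun j => k < j), Q (π j)) * Gᴴ)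

/-- Optimal weighted secrecy sum rate under encoding order `π`, power budget `P`
and weights `w`. -/
noncomputable def phi {K nt ne : ℕ} {n : Fin K → ℕ}
    (H : ∀ k : Fin K, Matrix (Fin (n k)) (Fin nt) ℂ)
    (G : Matrix (Fin ne) (Fin nt) ℂ) (P : ℝ) (w : Fin K → ℝ)
    (π : Equiv.Perm (Fin K)) : ℝ :=
  sSup {r : ℝ | ∃ Q : Fin K → Matrix (Fin nt) (Fin nt) ℂ,
    (∀ k, (Q k).PosSemidef) ∧ (∑ k, ((Q k).trace).re) ≤ P ∧
    (∀ k, 0 ≤ secrecyRate H G π Q k) ∧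
    r = ∑ k, w (π k) * secrecyRate H G π Q k}

open scoped MatrixOrder

section LoewnerOrder

variable {𝕜 m n : Type*} [RCLike 𝕜] [Fintype m] [Fintype n]

lemma exists_eq_conjTranspose_mul_self {X : Matrix n n 𝕜} (hX : X.PosSemidef) :
    ∃ C : Matrix n n 𝕜, X = Cᴴ * C := by
  classical
  exact CStarAlgebra.nonneg_iff_eq_star_mul_self.mp hX.nonneg

lemma re_trace_mono {X Y : Matrix n n 𝕜} (hXY : X ≤ Y) :
    RCLike.re X.trace ≤ RCLike.re Y.trace := by
  have htrace := (RCLike.nonneg_iff.1 (le_iff.1 hXY).trace_nonneg).1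
  rwa [trace_sub, map_sub, sub_nonneg] at htrace

variable [DecidableEq m] [DecidableEq n]

lemma le_algebraMap_of_trace_le {X : Matrix n n 𝕜} {P : ℝ} (hX : X.PosSemidef)
    (hP : RCLike.re X.trace ≤ P) : X ≤ algebraMap ℝ (Matrix n n 𝕜) P := by
  rw [hX.1.trace_eq_sum_eigenvalues, ← RCLike.ofReal_sum, RCLike.ofReal_re] at hP
  rw [le_algebraMap_iff_spectrum_le, hX.1.spectrum_real_eq_range_eigenvalues, Set.forall_mem_range]
  exact fun i =>
    (single_le_sum (fun j _ => hX.eigenvalues_nonneg j) (mem_univ i)).trans hP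

lemma one_le_det_of_one_le {A : Matrix n n 𝕜} (hA : 1 ≤ A) : 1 ≤ A.det := by
  have hpsd : A.PosSemidef := (zero_le_one.trans hA).posSemidef
  have hspec : ∀ x ∈ spectrum ℝ A, 1 ≤ x := (CFC.one_le_iff A hpsd.1).1 hA
  have hprod : 1 ≤ ∏ i, hpsd.1.eigenvalues i :=
    Finset.one_le_prod fun i _ => hspec _ (hpsd.1.eigenvalues_mem_spectrum_real i)
  rw [hpsd.1.det_eq_prod_eigenvalues]
  exact_mod_cast hprod

lemma det_le_det_of_le {A B : Matrix n n 𝕜} (hA : A.PosDef) (hAB : A ≤ B) : A.det ≤ B.det := by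
  obtain ⟨C, hC⟩ := exists_eq_conjTranspose_mul_self (le_iff.1 hAB)
  rw [← add_sub_cancel A B, hC, det_add_mul _ _ hA.det_pos.ne'.isUnit]
  refine le_mul_of_one_le_right hA.det_pos.le (one_le_det_of_one_le ?_)
  exact le_add_of_nonneg_right (hA.inv.posSemidef.mul_mul_conjTranspose_same C).nonneg

lemma det_fromBlocks_le_det_mul_det {A : Matrix m m 𝕜} {B : Matrix m n 𝕜} {D : Matrix n n 𝕜}
    (h : (fromBlocks A B Bᴴ D).PosDef) : (fromBlocks A B Bᴴ D).det ≤ A.det * D.det := by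
  have hA : A.PosDef := h.submatrix (e := Sum.inl) Sum.inl_injective
  have := hA.isUnit.invertible
  have hdet := det_fromBlocks₁₁ A B Bᴴ D
  rw [invOf_eq_nonsing_inv] at hdet
  have hschur : (D - Bᴴ * A⁻¹ * B).PosDef := by
    rw [((PosDef.fromBlocks₁₁ B D hA).1 h.posSemidef).posDef_iff_det_ne_zero]
    exact right_ne_zero_of_mul (hdet ▸ h.det_pos.ne')
  rw [hdet]
  refine mul_le_mul_of_nonneg_left (det_le_det_of_le hschur ?_) hA.det_pos.le
  exact sub_le_self _ (hA.inv.posSemidef.conjTranspose_mul_mul_same B).nonneg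

lemma det_one_add_mul_conjTranspose_mul_self (Z : Matrix n n 𝕜) (C : Matrix m n 𝕜) :
    (1 + Z * (Cᴴ * C)).det = (1 + C * Z * Cᴴ).det := by
  rw [← Matrix.mul_assoc, det_one_add_mul_comm, ← Matrix.mul_assoc]

/-- The three determinants are those of `1 + F Z Fᴴ`, where `F` is `L` stacked on `N`, and of its
two diagonal blocks. -/
lemma det_one_add_mul_add_le {l : Type*} [Fintype l] [DecidableEq l] {Z : Matrix n n 𝕜}
    (L : Matrix l n 𝕜) (N : Matrix m n 𝕜)
    (h : (1 + fromRows L N * Z * (fromRows L N)ᴴ).PosDef) :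
    (1 + Z * (Lᴴ * L + Nᴴ * N)).det ≤ (1 + Z * (Lᴴ * L)).det * (1 + Z * (Nᴴ * N)).det := by
  have hblock : 1 + fromRows L N * Z * (fromRows L N)ᴴ =
      fromBlocks (1 + L * Z * Lᴴ) (L * Z * Nᴴ) (N * Z * Lᴴ) (1 + N * Z * Nᴴ) := by
    rw [fromRows_mul, conjTranspose_fromRows_eq_fromCols_conjTranspose, fromRows_mul_fromCols,
      ← fromBlocks_one, fromBlocks_add, zero_add, zero_add]
  have hoff : N * Z * Lᴴ = (L * Z * Nᴴ)ᴴ :=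
    ((isHermitian_fromBlocks_iff.1 (hblock ▸ h.1)).2.1).symm
  have hsum : Lᴴ * L + Nᴴ * N = (fromRows L N)ᴴ * fromRows L N := by
    rw [conjTranspose_fromRows_eq_fromCols_conjTranspose, fromCols_mul_fromRows]
  rw [hsum]
  simp only [det_one_add_mul_conjTranspose_mul_self]
  rw [hblock, hoff] at h ⊢
  exact det_fromBlocks_le_det_mul_det h

end LoewnerOrder

section MMSE

lemma mul_inv_one_add_mul {R m n : Type*} [CommRing R] [Fintype m] [Fintype n] [DecidableEq m]
    [DecidableEq n] (U : Matrix m n R) (V : Matrix n m R) (h : IsUnit (1 + V * U).det) :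
    U * (1 + V * U)⁻¹ = (1 + U * V)⁻¹ * U := by
  have h' : IsUnit (1 + U * V).det := by rwa [det_one_add_mul_comm]
  have hcomm : (1 + U * V) * U = U * (1 + V * U) := by
    simp only [Matrix.add_mul, Matrix.mul_add, Matrix.one_mul, Matrix.mul_one, Matrix.mul_assoc]
  rw [← nonsing_inv_mul_cancel_left _ (U * (1 + V * U)⁻¹) h', ← Matrix.mul_assoc _ U, hcomm,
    mul_nonsing_inv_cancel_right _ _ h]

section Algebra

variable {R n : Type*} [CommRing R] [Fintype n] [DecidableEq n]

/-- The error covariance `(X⁻¹ + B)⁻¹` of the linear minimum mean square error estimate of a signal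
of covariance `X` received through a channel of Gram matrix `B`, in a form that also makes sense for
singular `X`. Dually, `mmse S M` is the Gram matrix to which the channel `M` is reduced when
interference of covariance `S` is absorbed into the noise. -/
noncomputable def mmse (B X : Matrix n n R) : Matrix n n R := X * (1 + B * X)⁻¹

variable {B X : Matrix n n R}

lemma mmse_eq_inv_mul (h : IsUnit (1 + B * X).det) : mmse B X = (1 + X * B)⁻¹ * X :=
  mul_inv_one_add_mul X B h

lemma mmse_mul_one_add (h : IsUnit (1 + B * X).det) : mmse B X * (1 + B * X) = X :=
  nonsing_inv_mul_cancel_right _ _ h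

lemma one_add_mul_mmse (h : IsUnit (1 + B * X).det) : (1 + B * X) * mmse X B = B := by
  rw [mmse_eq_inv_mul (by rwa [det_one_add_mul_comm])]
  exact mul_nonsing_inv_cancel_left _ _ h

lemma one_add_mul_add (h : IsUnit (1 + B * X).det) (Z : Matrix n n R) :
    1 + B * (X + Z) = (1 + B * X) * (1 + mmse X B * Z) := by
  rw [Matrix.mul_add, Matrix.mul_add, ← Matrix.mul_assoc, one_add_mul_mmse h,
    Matrix.mul_one, add_assoc]

lemma one_add_sub_mul_mmse (h : IsUnit (1 + B * X).det) (M : Matrix n n R) :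
    1 + (M - B) * mmse B X = (1 + M * X) * (1 + B * X)⁻¹ := by
  have hsplit : 1 + M * X = (1 + B * X) + (M - B) * X := by noncomm_ring
  rw [hsplit, Matrix.add_mul, mul_nonsing_inv _ h, Matrix.mul_assoc, mmse]

lemma one_sub_mul_mmse (h : IsUnit (1 + B * X).det) :
    1 - X * mmse X B = (1 + X * B)⁻¹ := by
  have h' : IsUnit (1 + X * B).det := by rwa [det_one_add_mul_comm]
  refine (inv_eq_left_inv ?_).symm
  rw [Matrix.sub_mul, Matrix.mul_assoc, mmse_mul_one_add h']
  noncomm_ring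

lemma mmse_add {Z : Matrix n n R} (h : IsUnit (1 + B * X).det)
    (hZ : IsUnit (1 + mmse X B * Z).det) : mmse B (X + Z) =
      mmse B X + (1 + X * B)⁻¹ * mmse (mmse X B) Z * (1 + B * X)⁻¹ := by
  have hXZ : X + Z = X * (1 + mmse X B * Z) + (1 - X * mmse X B) * Z := by noncomm_ring
  rw [mmse, one_add_mul_add h, Matrix.mul_inv_rev, ← Matrix.mul_assoc, ← one_sub_mul_mmse h]
  nth_rewrite 1 [hXZ]
  rw [Matrix.add_mul, mul_nonsing_inv_cancel_right _ _ hZ, Matrix.add_mul, Matrix.mul_assoc _ Z]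
  rfl

end Algebra

section PosSemidef

variable {𝕜 n : Type*} [RCLike 𝕜] [Fintype n] [DecidableEq n] {B S T X Y : Matrix n n 𝕜}

lemma one_le_det_one_add_mul (hB : B.PosSemidef) (hX : X.PosSemidef) : 1 ≤ (1 + B * X).det := by
  obtain ⟨C, rfl⟩ := exists_eq_conjTranspose_mul_self hX
  rw [det_one_add_mul_conjTranspose_mul_self]
  exact one_le_det_of_one_le (le_add_of_nonneg_right (hB.mul_mul_conjTranspose_same C).nonneg)

lemma isUnit_det_one_add_mul (hB : B.PosSemidef) (hX : X.PosSemidef) :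
    IsUnit (1 + B * X).det :=
  (zero_lt_one.trans_le (one_le_det_one_add_mul hB hX)).ne'.isUnit

lemma conjTranspose_one_add_mul (hB : B.IsHermitian) (hX : X.IsHermitian) :
    (1 + B * X)ᴴ = 1 + X * B := by
  rw [conjTranspose_add, conjTranspose_mul, hB.eq, hX.eq, conjTranspose_one]

lemma posSemidef_mmse (hB : B.PosSemidef) (hX : X.PosSemidef) : (mmse B X).PosSemidef := by
  obtain ⟨C, rfl⟩ := exists_eq_conjTranspose_mul_self hX
  have hpush : mmse B (Cᴴ * C) = Cᴴ * (1 + C * (B * Cᴴ))⁻¹ * C := by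
    rw [mmse, Matrix.mul_assoc, ← Matrix.mul_assoc B, mul_inv_one_add_mul, Matrix.mul_assoc]
    rw [Matrix.mul_assoc]
    exact isUnit_det_one_add_mul hB hX
  rw [hpush, ← Matrix.mul_assoc]
  exact (PosDef.one.add_posSemidef (hB.mul_mul_conjTranspose_same C)).inv.posSemidef
    |>.conjTranspose_mul_mul_same C

lemma mmse_mono (hB : B.PosSemidef) (hX : X.PosSemidef) (hXY : X ≤ Y) : mmse B X ≤ mmse B Y := by
  have hZ : (Y - X).PosSemidef := le_iff.1 hXY
  have hXB := posSemidef_mmse hX hB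
  rw [← add_sub_cancel X Y, mmse_add (isUnit_det_one_add_mul hB hX) (isUnit_det_one_add_mul hXB hZ),
    ← conjTranspose_one_add_mul hB.1 hX.1, ← conjTranspose_nonsing_inv]
  exact le_add_of_nonneg_right
    ((posSemidef_mmse hXB hZ).conjTranspose_mul_mul_same (1 + B * X)⁻¹).nonneg

lemma posDef_one_sub_mul_mul_conjTranspose {m : Type*} [Fintype m] [DecidableEq m]
    (hB : B.PosSemidef) (hT : T.PosSemidef) {F : Matrix m n 𝕜} (hF : Fᴴ * F = mmse B T) :
    (1 - F * B * Fᴴ).PosDef := by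
  have hC : (B + B * T * B).PosSemidef := by
    simpa [hB.1.eq] using hB.add (hT.mul_mul_conjTranspose_same B)
  have hinv : (1 - F * B * Fᴴ) * (1 + F * (B + B * T * B) * Fᴴ) = 1 := by
    have hFF : Fᴴ * F * (B + B * T * B) = T * B := by
      rw [show B + B * T * B = (1 + B * T) * B by noncomm_ring, ← Matrix.mul_assoc, hF,
        mmse_mul_one_add (isUnit_det_one_add_mul hB hT)]
    have hcross : F * B * Fᴴ * (F * (B + B * T * B) * Fᴴ) = F * (B * (T * B)) * Fᴴ := by
      rw [← hFF]
      simp only [Matrix.mul_assoc]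
    rw [Matrix.sub_mul, Matrix.one_mul, Matrix.mul_add (F * B * Fᴴ), Matrix.mul_one, hcross,
      Matrix.mul_add F, Matrix.add_mul, Matrix.mul_assoc B T]
    abel
  rw [← inv_eq_left_inv hinv]
  exact (PosDef.one.add_posSemidef (hC.mul_mul_conjTranspose_same F)).inv

end PosSemidef

end MMSE

section Reflection

section Algebra

variable {R n : Type*} [CommRing R] [Fintype n] [DecidableEq n] {A B T : Matrix n n R}

/-- The signal covariance whose error covariance `mmse B (reflect B A T)` is
`mmse B T - mmse B A`, for `A` between `0` and `T`. In `mmse B`-coordinates, `A ↦ reflect B A T` is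
thus the reflection of the order interval from `0` to `mmse B T` in its centre. -/
noncomputable def reflect (B A T : Matrix n n R) : Matrix n n R :=
  T - (1 + T * B) * mmse (B + (1 + B * T) * B) A * (1 + B * T)

lemma one_add_mul_reflect (h : IsUnit (1 + (B + (1 + B * T) * B) * A).det) :
    1 + B * reflect B A T =
      (1 + B * A) * (1 + (B + (1 + B * T) * B) * A)⁻¹ * (1 + B * T) := by
  have hsplit : (1 + B * T) * B * A = (1 + (B + (1 + B * T) * B) * A) - (1 + B * A) := by
    noncomm_ring
  have hcancel := mul_nonsing_inv _ h
  rw [reflect, mmse]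
  generalize (1 + (B + (1 + B * T) * B) * A)⁻¹ = J at hcancel ⊢
  calc 1 + B * (T - (1 + T * B) * (A * J) * (1 + B * T))
      = (1 + B * T) - (1 + B * T) * B * A * J * (1 + B * T) := by noncomm_ring
    _ = (1 + B * A) * J * (1 + B * T) := by
      rw [hsplit, Matrix.sub_mul, hcancel]
      noncomm_ring

lemma mmse_reflect (hA : IsUnit (1 + B * A).det) (hT : IsUnit (1 + B * T).det)
    (h : IsUnit (1 + (B + (1 + B * T) * B) * A).det) :
    mmse B (reflect B A T) = mmse B T - mmse B A := by
  have hreflect : IsUnit (1 + B * reflect B A T).det := by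
    rw [one_add_mul_reflect h, det_mul, det_mul]
    exact (hA.mul (isUnit_nonsing_inv_det _ h)).mul hT
  suffices hmul : (mmse B T - mmse B A) * (1 + B * reflect B A T) = reflect B A T by
    rw [mmse]
    nth_rewrite 1 [← hmul]
    exact mul_nonsing_inv_cancel_right _ _ hreflect
  have hdef : reflect B A T = T - (1 + T * B) *
    (A * (1 + (B + (1 + B * T) * B) * A)⁻¹) * (1 + B * T) := rfl
  have hcancel := mul_nonsing_inv _ h
  rw [one_add_mul_reflect h, hdef]
  generalize (1 + (B + (1 + B * T) * B) * A)⁻¹ = J at hcancel ⊢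
  calc (mmse B T - mmse B A) * ((1 + B * A) * J * (1 + B * T))
      = mmse B T * ((1 + (B + (1 + B * T) * B) * A) * J) * (1 + B * T)
          - mmse B T * (1 + B * T) * B * A * J * (1 + B * T)
          - mmse B A * (1 + B * A) * J * (1 + B * T) := by noncomm_ring
    _ = T - (1 + T * B) * (A * J) * (1 + B * T) := by
      rw [hcancel, Matrix.mul_one, mmse_mul_one_add hT, mmse_mul_one_add hA]
      noncomm_ring

lemma reflect_zero (B T : Matrix n n R) : reflect B 0 T = T := by
  simp [reflect, mmse]

lemma reflect_self (hT : IsUnit (1 + B * T).det) : reflect B T T = 0 := by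
  have hsq : 1 + (B + (1 + B * T) * B) * T = (1 + B * T) * (1 + B * T) := by noncomm_ring
  rw [reflect, mmse, hsq, Matrix.mul_inv_rev, Matrix.mul_assoc, ← Matrix.mul_assoc T,
    nonsing_inv_mul_cancel_right _ _ hT, ← Matrix.mul_assoc,
    show (1 + T * B) * T = T * (1 + B * T) by noncomm_ring, mul_nonsing_inv_cancel_right _ _ hT,
    sub_self]

end Algebra

variable {𝕜 n : Type*} [RCLike 𝕜] [Fintype n] [DecidableEq n] {A B T X Y : Matrix n n 𝕜}

lemma posSemidef_add_one_add_mul_mul (hB : B.PosSemidef) (hT : T.PosSemidef) :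
    (B + (1 + B * T) * B).PosSemidef := by
  have hconj := hT.mul_mul_conjTranspose_same B
  rw [hB.1.eq] at hconj
  rw [Matrix.add_mul, Matrix.one_mul]
  exact hB.add (hB.add hconj)

lemma reflect_anti (hB : B.PosSemidef) (hT : T.PosSemidef) (hX : X.PosSemidef) (hXY : X ≤ Y) :
    reflect B Y T ≤ reflect B X T := by
  have hmono := mmse_mono (posSemidef_add_one_add_mul_mul hB hT) hX hXY
  rw [reflect, reflect, ← conjTranspose_one_add_mul hB.1 hT.1]
  exact sub_le_sub_left (star_left_conjugate_le_conjugate hmono (1 + B * T)) T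

lemma posSemidef_reflect (hB : B.PosSemidef) (hA : A.PosSemidef) (hAT : A ≤ T) :
    (reflect B A T).PosSemidef := by
  have hT : T.PosSemidef := (hA.nonneg.trans hAT).posSemidef
  have hle := reflect_anti hB hT hA hAT
  rw [reflect_self (isUnit_det_one_add_mul hB hT)] at hle
  exact hle.posSemidef

lemma reflect_le (hB : B.PosSemidef) (hA : A.PosSemidef) (hAT : A ≤ T) : reflect B A T ≤ T := by
  have hT : T.PosSemidef := (hA.nonneg.trans hAT).posSemidef
  simpa only [reflect_zero] using reflect_anti hB hT PosSemidef.zero hA.nonneg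

end Reflection

section MutualInfo

variable {𝕜 n : Type*} [RCLike 𝕜] [Fintype n] [DecidableEq n] {A B M S T X Y : Matrix n n 𝕜}

lemma norm_le_norm_of_nonneg_of_le {a b : 𝕜} (ha : 0 ≤ a) (hab : a ≤ b) : ‖a‖ ≤ ‖b‖ := by
  rwa [← RCLike.ofReal_le_ofReal (K := 𝕜), RCLike.norm_of_nonneg' ha,
    RCLike.norm_of_nonneg' (ha.trans hab)]

/-- `log det (1 + M X)`: the mutual information over a channel of Gram matrix `M` for a Gaussian
input of covariance `X`. The determinant is at least `1` when `M` and `X` are positive semidefinite;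
the norm only brings it from `𝕜` to `ℝ`. -/
noncomputable def mutualInfo (M X : Matrix n n 𝕜) : ℝ := Real.log ‖(1 + M * X).det‖

lemma mutualInfo_nonneg (hM : M.PosSemidef) (hX : X.PosSemidef) : 0 ≤ mutualInfo M X := by
  have hnorm := norm_le_norm_of_nonneg_of_le zero_le_one (one_le_det_one_add_mul hM hX)
  rw [norm_one] at hnorm
  exact Real.log_nonneg hnorm

lemma mutualInfo_sub (hM : M.PosSemidef) (hS : S.PosSemidef) (hSX : S ≤ X) :
    mutualInfo (mmse S M) (X - S) = mutualInfo M X - mutualInfo M S := by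
  have hMS := isUnit_det_one_add_mul hM hS
  have hshift := isUnit_det_one_add_mul (posSemidef_mmse hS hM) (le_iff.1 hSX)
  rw [mutualInfo, mutualInfo, ← add_sub_cancel S X, one_add_mul_add hMS, det_mul, norm_mul,
    Real.log_mul (norm_ne_zero_iff.2 hMS.ne_zero) (by simpa using hshift.ne_zero),
    add_sub_cancel, mutualInfo, add_sub_cancel_left]

lemma mutualInfo_mono (hM : M.PosSemidef) (hX : X.PosSemidef) (hXY : X ≤ Y) :
    mutualInfo M X ≤ mutualInfo M Y := by
  rw [← sub_nonneg, ← mutualInfo_sub hM hX hXY]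
  exact mutualInfo_nonneg (posSemidef_mmse hX hM) (le_iff.1 hXY)

lemma det_one_add_sub_mul_mmse_ne_zero (hM : M.PosSemidef) (hB : B.PosSemidef)
    (hX : X.PosSemidef) : (1 + (M - B) * mmse B X).det ≠ 0 := by
  have hBX := isUnit_det_one_add_mul hB hX
  rw [one_add_sub_mul_mmse hBX, det_mul]
  exact ((isUnit_det_one_add_mul hM hX).mul (isUnit_nonsing_inv_det _ hBX)).ne_zero

lemma log_norm_det_one_add_sub_mul_mmse (hM : M.PosSemidef) (hB : B.PosSemidef)
    (hX : X.PosSemidef) :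
    Real.log ‖(1 + (M - B) * mmse B X).det‖ = mutualInfo M X - mutualInfo B X := by
  have hMX := isUnit_det_one_add_mul hM hX
  have hBX := isUnit_det_one_add_mul hB hX
  rw [one_add_sub_mul_mmse hBX, det_mul, det_nonsing_inv, Ring.inverse_eq_inv', norm_mul, norm_inv,
    ← div_eq_mul_inv,
    Real.log_div (norm_ne_zero_iff.2 hMX.ne_zero) (norm_ne_zero_iff.2 hBX.ne_zero)]
  rfl

lemma norm_det_one_add_sub_mul_add_le (hM : M.PosSemidef) (hB : B.PosSemidef) (hT : T.PosSemidef)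
    (hX : X.PosSemidef) (hY : Y.PosSemidef) (hXY : X + Y = mmse B T) :
    ‖(1 + (M - B) * (X + Y)).det‖ ≤ ‖(1 + (M - B) * X).det‖ * ‖(1 + (M - B) * Y).det‖ := by
  obtain ⟨L, rfl⟩ := exists_eq_conjTranspose_mul_self hX
  obtain ⟨N, rfl⟩ := exists_eq_conjTranspose_mul_self hY
  have hF : (fromRows L N)ᴴ * fromRows L N = mmse B T := by
    rw [conjTranspose_fromRows_eq_fromCols_conjTranspose, fromCols_mul_fromRows, hXY]
  have hpos : (1 + fromRows L N * (M - B) * (fromRows L N)ᴴ).PosDef := by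
    have hadd := (posDef_one_sub_mul_mul_conjTranspose hB hT hF).add_posSemidef
      (hM.mul_mul_conjTranspose_same (fromRows L N))
    rwa [sub_add_eq_add_sub, add_sub_assoc, ← Matrix.sub_mul, ← Matrix.mul_sub] at hadd
  rw [← norm_mul]
  refine norm_le_norm_of_nonneg_of_le ?_ (det_one_add_mul_add_le L N hpos)
  rw [hXY, ← hF, det_one_add_mul_conjTranspose_mul_self]
  exact hpos.det_pos.le

lemma mutualInfo_add_mutualInfo_reflect_le (hM : M.PosSemidef) (hB : B.PosSemidef)
    (hA : A.PosSemidef) (hAT : A ≤ T) :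
    mutualInfo B A + mutualInfo B (reflect B A T) - mutualInfo B T ≤
      mutualInfo M A + mutualInfo M (reflect B A T) - mutualInfo M T := by
  have hT : T.PosSemidef := (hA.nonneg.trans hAT).posSemidef
  have hA' : (reflect B A T).PosSemidef := posSemidef_reflect hB hA hAT
  have hsum : mmse B A + mmse B (reflect B A T) = mmse B T := by
    rw [mmse_reflect (isUnit_det_one_add_mul hB hA) (isUnit_det_one_add_mul hB hT)
      (isUnit_det_one_add_mul (posSemidef_add_one_add_mul_mul hB hT) hA), add_sub_cancel]
  have hle := norm_det_one_add_sub_mul_add_le hM hB hT (posSemidef_mmse hB hA)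
    (posSemidef_mmse hB hA') hsum
  have hne {X : Matrix n n 𝕜} (hX : X.PosSemidef) : ‖(1 + (M - B) * mmse B X).det‖ ≠ 0 :=
    norm_ne_zero_iff.2 (det_one_add_sub_mul_mmse_ne_zero hM hB hX)
  rw [hsum] at hle
  have hlog := Real.log_le_log ((norm_nonneg _).lt_of_ne' (hne hT)) hle
  rw [Real.log_mul (hne hA) (hne hA')] at hlog
  simp only [log_norm_det_one_add_sub_mul_mmse hM hB, hA, hA', hT] at hlog
  linarith

theorem exists_reflection (hB : B.PosSemidef) (hS : S.PosSemidef) (hSA : S ≤ A) (hAT : A ≤ T) :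
    ∃ A', S ≤ A' ∧ A' ≤ T ∧ ∀ M : Matrix n n 𝕜, M.PosSemidef →
      mutualInfo B A + mutualInfo B A' - mutualInfo B T - mutualInfo B S ≤
        mutualInfo M A + mutualInfo M A' - mutualInfo M T - mutualInfo M S := by
  have hBS := posSemidef_mmse hS hB
  have hA : (A - S).PosSemidef := le_iff.1 hSA
  have hAT' : A - S ≤ T - S := sub_le_sub_right hAT S
  have hSA' := posSemidef_reflect hBS hA hAT'
  refine ⟨S + reflect (mmse S B) (A - S) (T - S), le_add_of_nonneg_right hSA'.nonneg, ?_,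
    fun M hM => ?_⟩
  · exact le_sub_iff_add_le'.1 (reflect_le hBS hA hAT')
  have hle := mutualInfo_add_mutualInfo_reflect_le (posSemidef_mmse hS hM) hBS hA hAT'
  have hchain {M : Matrix n n 𝕜} (hM : M.PosSemidef) :=
    mutualInfo_sub (X := S + reflect (mmse S B) (A - S) (T - S)) hM hS
      (le_add_of_nonneg_right hSA'.nonneg)
  simp only [add_sub_cancel_left] at hchain
  rw [hchain hB, hchain hM, mutualInfo_sub hB hS hSA, mutualInfo_sub hM hS hSA,
    mutualInfo_sub hB hS (hSA.trans hAT), mutualInfo_sub hM hS (hSA.trans hAT)] at hle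
  linarith

end MutualInfo

section EncodingOrders

variable {𝕜 ι n : Type*} [RCLike 𝕜] [Fintype n] [DecidableEq n]

/-- The secrecy rate, against an eavesdropper of Gram matrix `E`, of a user of Gram matrix `M` who
transmits with covariance `T - S` under interference of covariance `S`. -/
noncomputable def secrecyGain (M E S T : Matrix n n 𝕜) : ℝ :=
  mutualInfo M T - mutualInfo M S - mutualInfo E T + mutualInfo E S

lemma secrecyGain_le_mutualInfo {M E S T : Matrix n n 𝕜} (hM : M.PosSemidef) (hE : E.PosSemidef)
    (hS : S.PosSemidef) (hST : S ≤ T) : secrecyGain M E S T ≤ mutualInfo M T := by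
  have hpos := mutualInfo_nonneg hM hS
  have hmono := mutualInfo_mono hE hS hST
  rw [secrecyGain]
  linarith

/-- `Achievable M E w rates l T r`: encoding the users of `l` from the head on, the last one without
interference, yields the weighted sum rate `r` with total covariance `T` and all secrecy rates in
`rates`. -/
inductive Achievable (M : ι → Matrix n n 𝕜) (E : Matrix n n 𝕜) (w : ι → ℝ) (rates : Set ℝ) :
    List ι → Matrix n n 𝕜 → ℝ → Prop
  | nil : Achievable M E w rates [] 0 0
  | cons {u : ι} {l : List ι} {S T : Matrix n n 𝕜} {r : ℝ} (tail : Achievable M E w rates l S r)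
      (le : S ≤ T) (mem : secrecyGain (M u) E S T ∈ rates) :
      Achievable M E w rates (u :: l) T (w u * secrecyGain (M u) E S T + r)

variable {M : ι → Matrix n n 𝕜} {E : Matrix n n 𝕜} {w : ι → ℝ} {rates : Set ℝ} {l l' l'' : List ι}
  {T X : Matrix n n 𝕜} {r : ℝ}

namespace Achievable

lemma posSemidef (h : Achievable M E w rates l T r) : T.PosSemidef := by
  induction h with
  | nil => exact PosSemidef.zero
  | cons _ le _ ih => exact (ih.nonneg.trans le).posSemidef

lemma mono {rates' : Set ℝ} (hrates : rates ⊆ rates') (h : Achievable M E w rates l T r) :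
    Achievable M E w rates' l T r := by
  induction h with
  | nil => exact nil
  | cons _ le mem ih => exact cons ih le (hrates mem)

lemma nonneg (hw : ∀ u, 0 ≤ w u) (h : Achievable M E w (Set.Ici 0) l T r) : 0 ≤ r := by
  induction h with
  | nil => exact le_rfl
  | cons _ _ mem ih => exact add_nonneg (mul_nonneg (hw _) mem) ih

lemma le_sum_mutualInfo (hM : ∀ u, (M u).PosSemidef) (hE : E.PosSemidef) (hw : ∀ u, 0 ≤ w u)
    (h : Achievable M E w rates l T r) (hTX : T ≤ X) :
    r ≤ (l.map fun u => w u * mutualInfo (M u) X).sum := by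
  induction h with
  | nil => exact le_rfl
  | @cons u _ S T _ tail le _ ih =>
    have hT : T.PosSemidef := (tail.posSemidef.nonneg.trans le).posSemidef
    have hrate : secrecyGain (M u) E S T ≤ mutualInfo (M u) X :=
      (secrecyGain_le_mutualInfo (hM u) hE tail.posSemidef le).trans (mutualInfo_mono (hM u) hT hTX)
    rw [List.map_cons, List.sum_cons]
    exact add_le_add (mul_le_mul_of_nonneg_left hrate (hw u)) (ih (le.trans hTX))

/-- From the last user to the first, the covariance `A - S` freed behind a user is moved in front of
that user by reflecting in the channel of the eavesdropper, which does not lower the rate. A user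
whose rate was negative gets zero covariance instead. -/
lemma exists_nonneg_rates (hM : ∀ u, (M u).PosSemidef) (hE : E.PosSemidef) (hw : ∀ u, 0 ≤ w u)
    (h : Achievable M E w rates l T r) :
    ∃ T' r', T' ≤ T ∧ r ≤ r' ∧ Achievable M E w (Set.Ici 0) l T' r' := by
  induction h with
  | nil => exact ⟨0, 0, le_rfl, le_rfl, nil⟩
  | @cons u _ A T r _ hAT _ ih =>
    obtain ⟨S, r', hSA, hr, hS⟩ := ih
    rcases le_total 0 (secrecyGain (M u) E A T) with hpos | hneg
    · obtain ⟨A', hSA', hA'T, hmin⟩ := exists_reflection hE hS.posSemidef hSA hAT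
      have hgain : secrecyGain (M u) E A T ≤ secrecyGain (M u) E S A' := by
        have := hmin (M u) (hM u)
        simp only [secrecyGain]
        linarith
      exact ⟨A', _, hA'T, add_le_add (mul_le_mul_of_nonneg_left hgain (hw u)) hr,
        cons hS hSA' (hpos.trans hgain)⟩
    · have hzero : secrecyGain (M u) E S S = 0 := by rw [secrecyGain]; ring
      refine ⟨S, _, hSA.trans hAT, ?_, cons hS le_rfl hzero.ge⟩
      rw [hzero]
      exact add_le_add ((mul_nonpos_of_nonneg_of_nonpos (hw u) hneg).trans (mul_zero _).ge) hr

end Achievable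

/-- The order `l'` does at least as well as the order `l` for every total covariance, with no sign
constraint on the secrecy rates. -/
def Dominates (M : ι → Matrix n n 𝕜) (E : Matrix n n 𝕜) (w : ι → ℝ) (l' l : List ι) : Prop :=
  ∀ ⦃T r⦄, Achievable M E w Set.univ l T r → ∃ r', r ≤ r' ∧ Achievable M E w Set.univ l' T r'

namespace Dominates

lemma refl (l : List ι) : Dominates M E w l l := fun _ r h => ⟨r, le_rfl, h⟩

lemma trans (h' : Dominates M E w l'' l') (h : Dominates M E w l' l) : Dominates M E w l'' l := by
  intro T r hr
  obtain ⟨r', hrr', hr'⟩ := h hr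
  obtain ⟨r'', hrr'', hr''⟩ := h' hr'
  exact ⟨r'', hrr'.trans hrr'', hr''⟩

lemma cons (h : Dominates M E w l' l) (u : ι) : Dominates M E w (u :: l') (u :: l) := by
  rintro T _ (_ | ⟨tail, le, mem⟩)
  obtain ⟨r', hrr', tail'⟩ := h tail
  exact ⟨_, by gcongr, tail'.cons le mem⟩

lemma swap (hM : ∀ u, (M u).PosSemidef) (hE : E.PosSemidef) (hw : ∀ u, 0 ≤ w u) {a b : ι}
    (hab : w a ≤ w b) (l : List ι) : Dominates M E w (b :: a :: l) (a :: b :: l) := by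
  rintro T _ (_ | ⟨_ | ⟨tail, hSA, _⟩, hAT, _⟩)
  obtain ⟨A', hSA', hA'T, hmin⟩ := exists_reflection (hM b) tail.posSemidef hSA hAT
  refine ⟨_, ?_, (tail.cons hSA' trivial).cons hA'T trivial⟩
  have hEve := mul_nonneg (sub_nonneg.2 hab) (sub_nonneg.2 (hmin E hE))
  have hUser := mul_nonneg (hw a) (sub_nonneg.2 (hmin (M a) (hM a)))
  simp only [secrecyGain]
  linarith

lemma move_front (hM : ∀ u, (M u).PosSemidef) (hE : E.PosSemidef) (hw : ∀ u, 0 ≤ w u) {x : ι}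
    {s : List ι} (hs : ∀ y ∈ s, w y ≤ w x) (t : List ι) :
    Dominates M E w (x :: (s ++ t)) (s ++ x :: t) := by
  induction s with
  | nil => exact refl _
  | cons y s ih =>
    rw [List.forall_mem_cons] at hs
    exact (swap hM hE hw hs.1 (s ++ t)).trans ((ih hs.2).cons y)

lemma of_perm_of_pairwise (hM : ∀ u, (M u).PosSemidef) (hE : E.PosSemidef) (hw : ∀ u, 0 ≤ w u)
    (hl' : l'.Pairwise fun x y => w y ≤ w x) (hperm : l.Perm l') : Dominates M E w l' l := by
  induction hl' generalizing l with
  | nil =>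
    obtain rfl := hperm.eq_nil
    exact refl []
  | @cons x l' hx _ ih =>
    obtain ⟨s, t, rfl⟩ := List.append_of_mem (hperm.mem_iff.2 List.mem_cons_self)
    have hperm' : (s ++ t).Perm l' := List.perm_middle.symm.trans hperm |>.cons_inv
    exact ((ih hperm').cons x).trans (move_front hM hE hw
      (fun y hy => hx y (hperm'.subset (List.mem_append_left t hy))) t)

end Dominates

namespace Achievable

lemma ofFn_iff {m : ℕ} {u : Fin m → ι} :
    Achievable M E w rates (List.ofFn u) T r ↔ ∃ C : Fin m → Matrix n n 𝕜,
      (∀ k, (C k).PosSemidef) ∧ ∑ k, C k = T ∧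
      (∀ k, secrecyGain (M (u k)) E (∑ j with k < j, C j) (∑ j with k ≤ j, C j) ∈ rates) ∧
      r = ∑ k, w (u k) *
        secrecyGain (M (u k)) E (∑ j with k < j, C j) (∑ j with k ≤ j, C j) := by
  induction m generalizing T r with
  | zero =>
    rw [List.ofFn_zero]
    constructor
    · rintro ⟨⟩
      exact ⟨0, by simp⟩
    · rintro ⟨C, -, rfl, -, rfl⟩
      simpa using nil
  | succ m ih =>
    rw [List.ofFn_succ]
    constructor
    · rintro (_ | ⟨tail, le, mem⟩)
      obtain ⟨C, hC, rfl, hrates, rfl⟩ := ih.1 tail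
      refine ⟨Fin.cons (T - ∑ k, C k) C, Fin.cases (le_iff.1 le) hC, ?_,
        Fin.forall_fin_succ.2 ⟨?_, fun k => ?_⟩, ?_⟩
      · simp [Fin.sum_univ_succ]
      · simpa [Finset.sum_filter, Fin.sum_univ_succ] using mem
      · simpa [Finset.sum_filter, Fin.sum_univ_succ] using hrates k
      · simp [Finset.sum_filter, Fin.sum_univ_succ]
    · rintro ⟨C, hC, rfl, hrates, rfl⟩
      have hrates' (k : Fin m) : secrecyGain (M (u k.succ)) E (∑ j : Fin m with k < j, C j.succ)
          (∑ j : Fin m with k ≤ j, C j.succ) ∈ rates := by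
        simpa [Finset.sum_filter, Fin.sum_univ_succ] using hrates k.succ
      have tail := ih.2 ⟨_, fun k => hC k.succ, rfl, hrates', rfl⟩
      have le : ∑ k : Fin m, C k.succ ≤ ∑ k, C k := by
        rw [Fin.sum_univ_succ]
        exact le_add_of_nonneg_left (hC 0).nonneg
      have mem : secrecyGain (M (u 0)) E (∑ k : Fin m, C k.succ) (∑ k, C k) ∈ rates := by
        simpa [Finset.sum_filter, Fin.sum_univ_succ] using hrates 0
      convert tail.cons le mem using 1
      simp [Finset.sum_filter, Fin.sum_univ_succ]

end Achievable

theorem sSup_achievable_le_of_perm (hM : ∀ u, (M u).PosSemidef) (hE : E.PosSemidef)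
    (hw : ∀ u, 0 ≤ w u) (hl' : l'.Pairwise fun x y => w y ≤ w x) (hperm : l.Perm l') (P : ℝ) :
    sSup {r | ∃ T, RCLike.re T.trace ≤ P ∧ Achievable M E w (Set.Ici 0) l T r} ≤
      sSup {r | ∃ T, RCLike.re T.trace ≤ P ∧ Achievable M E w (Set.Ici 0) l' T r} := by
  have hbdd : BddAbove {r | ∃ T, RCLike.re T.trace ≤ P ∧ Achievable M E w (Set.Ici 0) l' T r} :=
    ⟨_, fun _ ⟨_, hP, h⟩ =>
      h.le_sum_mutualInfo hM hE hw (le_algebraMap_of_trace_le h.posSemidef hP)⟩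
  refine Real.sSup_le ?_ (Real.sSup_nonneg fun _ ⟨_, _, h⟩ => h.nonneg hw)
  rintro r ⟨T, hP, h⟩
  obtain ⟨r₁, hr₁, h₁⟩ := Dominates.of_perm_of_pairwise hM hE hw hl' hperm
    (h.mono (Set.subset_univ _))
  obtain ⟨T₂, r₂, hT₂, hr₂, h₂⟩ := h₁.exists_nonneg_rates hM hE hw
  exact (hr₁.trans hr₂).trans (le_csSup hbdd ⟨T₂, (re_trace_mono hT₂).trans hP, h₂⟩)

end EncodingOrders

section Channels

lemma logdetI_eq_mutualInfo {m nt : ℕ} (H : Matrix (Fin m) (Fin nt) ℂ)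
    {X : Matrix (Fin nt) (Fin nt) ℂ} (hX : X.PosSemidef) :
    logdetI (H * X * Hᴴ) = mutualInfo (Hᴴ * H) X := by
  have hdet := (PosSemidef.one.add (hX.mul_mul_conjTranspose_same H)).det_nonneg
  rw [logdetI, mutualInfo, Matrix.mul_assoc Hᴴ, det_one_add_mul_comm Hᴴ,
    ← Complex.re_eq_norm.2 hdet]

variable {K nt ne : ℕ} {n : Fin K → ℕ} (H : ∀ k : Fin K, Matrix (Fin (n k)) (Fin nt) ℂ)
  (G : Matrix (Fin ne) (Fin nt) ℂ)

lemma secrecyRate_eq_secrecyGain (π : Equiv.Perm (Fin K)) {Q : Fin K → Matrix (Fin nt) (Fin nt) ℂ}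
    (hQ : ∀ k, (Q k).PosSemidef) (k : Fin K) :
    secrecyRate H G π Q k = secrecyGain ((H (π k))ᴴ * H (π k)) (Gᴴ * G)
      (∑ j with k < j, Q (π j)) (∑ j with k ≤ j, Q (π j)) := by
  have hsum (s : Finset (Fin K)) : (∑ j ∈ s, Q (π j)).PosSemidef :=
    posSemidef_sum s fun j _ => hQ (π j)
  simp only [secrecyRate, secrecyGain, logdetI_eq_mutualInfo, hsum]

lemma phi_eq_sSup_achievable (P : ℝ) (w : Fin K → ℝ) (π : Equiv.Perm (Fin K)) :
    phi H G P w π = sSup {r | ∃ T, RCLike.re T.trace ≤ P ∧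
      Achievable (fun u => (H u)ᴴ * H u) (Gᴴ * G) w (Set.Ici 0) (List.ofFn π) T r} := by
  have htrace (Q : Fin K → Matrix (Fin nt) (Fin nt) ℂ) :
      (∑ k, Q (π k)).trace.re = ∑ k, (Q k).trace.re := by
    rw [Equiv.sum_comp π Q, trace_sum, Complex.re_sum]
  rw [phi]
  simp only [Achievable.ofFn_iff]
  refine congrArg sSup (Set.ext fun r => ⟨?_, ?_⟩)
  · rintro ⟨Q, hQ, hP, hrates, rfl⟩
    simp only [secrecyRate_eq_secrecyGain H G π hQ] at hrates ⊢
    exact ⟨_, (htrace Q).trans_le hP, Q ∘ π, fun k => hQ (π k), rfl, hrates, rfl⟩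
  · rintro ⟨_, hP, C, hC, rfl, hrates, rfl⟩
    obtain ⟨Q, rfl⟩ : ∃ Q, C = Q ∘ π := ⟨C ∘ π.symm, by simp [Function.comp_assoc]⟩
    have hQ : ∀ k, (Q k).PosSemidef := π.forall_congr_right.1 hC
    refine ⟨Q, hQ, (htrace Q).ge.trans hP, ?_, ?_⟩
    · simp only [secrecyRate_eq_secrecyGain H G π hQ]
      exact hrates
    · simp only [secrecyRate_eq_secrecyGain H G π hQ, Function.comp_apply]

end Channels

/-- The descending-weight encoding order maximizes the weighted secrecy sum rate. -/
theorem optimal_encoding_order (K nt ne : ℕ) (hK : 1 ≤ K) (n : Fin K → ℕ)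
    (H : ∀ k : Fin K, Matrix (Fin (n k)) (Fin nt) ℂ)
    (G : Matrix (Fin ne) (Fin nt) ℂ) (P : ℝ) (hP : 0 ≤ P)
    (w : Fin K → ℝ) (hw : ∀ k, 0 ≤ w k)
    (πs : Equiv.Perm (Fin K))
    (hdesc : ∀ k l : Fin K, k ≤ l → w (πs l) ≤ w (πs k))
    (σ : Equiv.Perm (Fin K)) :
    phi H G P w σ ≤ phi H G P w πs := by
  have hperm : (List.ofFn σ).Perm (List.ofFn πs) := by
    have hσ : ⇑σ = πs ∘ σ.trans πs.symm := by ext; simp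
    rw [hσ]
    exact Equiv.Perm.ofFn_comp_perm _ _
  have hsorted : (List.ofFn πs).Pairwise fun x y => w y ≤ w x :=
    List.pairwise_ofFn.2 fun k l hkl => hdesc k l hkl.le
  rw [phi_eq_sSup_achievable, phi_eq_sSup_achievable]
  exact sSup_achievable_le_of_perm (fun u => posSemidef_conjTranspose_mul_self (H u))
    (posSemidef_conjTranspose_mul_self G) hw hsorted hperm P
end

section
/- Let A and C be n×n complex Hermitian positive semidefinite matrices. Then det(I + A + C) ≤ det(I + A) · det(I + C), where all three determinants are real numbers ≥ 1. -/
open Matrix ComplexOrder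

/-!
Write `A = Sᴴ * S` and `C = Rᴴ * R`, and let `M` be the matrix `S` stacked on top of `R`, so that
`Mᴴ * M = A + C`. By the Weinstein–Aronszajn identity `det (1 + A + C) = det (1 + M * Mᴴ)`, and
`1 + M * Mᴴ` is a positive semidefinite block matrix with diagonal blocks `1 + S * Sᴴ` and
`1 + R * Rᴴ`. Fischer's inequality bounds its determinant by the product of the determinants of
these blocks, which are `det (1 + A)` and `det (1 + C)` by the same identity.
-/

section LoewnerOrder

open scoped MatrixOrder

variable {𝕜 m n : Type*} [RCLike 𝕜] [Fintype m] [Fintype n]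

lemma exists_eq_conjTranspose_mul_self_s5 {B : Matrix n n 𝕜} (hB : B.PosSemidef) :
    ∃ R : Matrix n n 𝕜, B = Rᴴ * R := by
  classical
  exact CStarAlgebra.nonneg_iff_eq_star_mul_self.mp hB.nonneg

variable [DecidableEq m] [DecidableEq n]

lemma one_le_det_of_one_le_s5 {X : Matrix n n 𝕜} (hX : 1 ≤ X) : 1 ≤ X.det := by
  have hherm : X.IsHermitian := (nonneg_iff_posSemidef.mp (zero_le_one.trans hX)).isHermitian
  have heig (i : n) : 1 ≤ hherm.eigenvalues i :=
    (CFC.one_le_iff X hherm).mp hX _ (hherm.eigenvalues_mem_spectrum_real i)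
  rw [hherm.det_eq_prod_eigenvalues]
  exact_mod_cast Finset.one_le_prod fun i _ ↦ heig i

lemma one_le_det_one_add {B : Matrix n n 𝕜} (hB : B.PosSemidef) : 1 ≤ (1 + B).det :=
  one_le_det_of_one_le_s5 (le_add_of_nonneg_right hB.nonneg)

lemma det_le_det_of_nonneg_of_le {X Y : Matrix n n 𝕜} (hX : 0 ≤ X) (hXY : X ≤ Y) :
    X.det ≤ Y.det := by
  have hXpsd : X.PosSemidef := nonneg_iff_posSemidef.mp hX
  obtain hdet | hdet := eq_or_ne X.det 0
  · rw [hdet]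
    exact (nonneg_iff_posSemidef.mp (hX.trans hXY)).det_nonneg
  obtain ⟨S, hS⟩ := exists_eq_conjTranspose_mul_self_s5 (le_iff.mp hXY)
  calc X.det ≤ X.det * (1 + S * X⁻¹ * Sᴴ).det :=
        le_mul_of_one_le_right hXpsd.det_nonneg
          (one_le_det_one_add (hXpsd.inv.mul_mul_conjTranspose_same S))
    _ = Y.det := by rw [← det_add_mul _ _ hdet.isUnit, ← hS, add_sub_cancel]

/-- **Fischer's inequality**, from `0 ≤ D - Bᴴ * A⁻¹ * B ≤ D` for the Schur complement. -/
lemma det_fromBlocks_le_mul {A : Matrix m m 𝕜} {B : Matrix m n 𝕜} {D : Matrix n n 𝕜}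
    (h : (fromBlocks A B Bᴴ D).PosSemidef) :
    (fromBlocks A B Bᴴ D).det ≤ A.det * D.det := by
  have hA : A.PosSemidef := h.submatrix Sum.inl
  have hD : D.PosSemidef := h.submatrix Sum.inr
  obtain hdet | hdet := eq_or_ne (fromBlocks A B Bᴴ D).det 0
  · rw [hdet]
    exact mul_nonneg hA.det_nonneg hD.det_nonneg
  have hApos : A.PosDef := (h.posDef_iff_det_ne_zero.mpr hdet).submatrix Sum.inl_injective
  have : Invertible A := hApos.isUnit.invertible
  have hschur : 0 ≤ D - Bᴴ * A⁻¹ * B := ((hApos.fromBlocks₁₁ B D).mp h).nonneg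
  have hle : D - Bᴴ * A⁻¹ * B ≤ D :=
    sub_le_self _ (hA.inv.conjTranspose_mul_mul_same B).nonneg
  rw [det_fromBlocks₁₁, invOf_eq_nonsing_inv]
  exact mul_le_mul_of_nonneg_left (det_le_det_of_nonneg_of_le hschur hle) hA.det_nonneg

end LoewnerOrder

section Subadditivity

variable {𝕜 l m n : Type*} [RCLike 𝕜] [Fintype l] [Fintype m] [Fintype n] [DecidableEq n]

lemma det_one_add_conjTranspose_mul_self_add_le_mul (S : Matrix l n 𝕜) (R : Matrix m n 𝕜) :
    (1 + Sᴴ * S + Rᴴ * R).det ≤ (1 + Sᴴ * S).det * (1 + Rᴴ * R).det := by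
  classical
  have hblocks : 1 + fromRows S R * (fromRows S R)ᴴ =
      fromBlocks (1 + S * Sᴴ) (S * Rᴴ) (S * Rᴴ)ᴴ (1 + R * Rᴴ) := by
    rw [conjTranspose_fromRows_eq_fromCols_conjTranspose, fromRows_mul_fromCols, ← fromBlocks_one,
      fromBlocks_add, zero_add, zero_add, conjTranspose_mul, conjTranspose_conjTranspose]
  have hpsd : (1 + fromRows S R * (fromRows S R)ᴴ).PosSemidef :=
    PosSemidef.one.add (posSemidef_self_mul_conjTranspose _)
  calc (1 + Sᴴ * S + Rᴴ * R).det
      = (1 + (fromRows S R)ᴴ * fromRows S R).det := by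
        rw [conjTranspose_fromRows_eq_fromCols_conjTranspose, fromCols_mul_fromRows, add_assoc]
    _ = (fromBlocks (1 + S * Sᴴ) (S * Rᴴ) (S * Rᴴ)ᴴ (1 + R * Rᴴ)).det := by
        rw [det_one_add_mul_comm, hblocks]
    _ ≤ (1 + S * Sᴴ).det * (1 + R * Rᴴ).det := det_fromBlocks_le_mul (hblocks ▸ hpsd)
    _ = (1 + Sᴴ * S).det * (1 + Rᴴ * R).det := by
        rw [det_one_add_mul_comm S, det_one_add_mul_comm R]

theorem det_one_add_add_le_mul_general {A C : Matrix n n 𝕜}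
    (hA : A.PosSemidef) (hC : C.PosSemidef) :
    RCLike.im (1 + A).det = 0 ∧ RCLike.im (1 + C).det = 0 ∧ RCLike.im (1 + A + C).det = 0 ∧
    1 ≤ RCLike.re (1 + A).det ∧ 1 ≤ RCLike.re (1 + C).det ∧ 1 ≤ RCLike.re (1 + A + C).det ∧
    RCLike.re (1 + A + C).det ≤ RCLike.re (1 + A).det * RCLike.re (1 + C).det := by
  have hle : (1 + A + C).det ≤ (1 + A).det * (1 + C).det := by
    obtain ⟨S, rfl⟩ := exists_eq_conjTranspose_mul_self_s5 hA
    obtain ⟨R, rfl⟩ := exists_eq_conjTranspose_mul_self_s5 hC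
    exact det_one_add_conjTranspose_mul_self_add_le_mul S R
  have re_im {B : Matrix n n 𝕜} (hB : B.PosSemidef) :
      1 ≤ RCLike.re (1 + B).det ∧ RCLike.im (1 + B).det = 0 := by
    obtain ⟨hre, him⟩ := RCLike.le_iff_re_im.mp (one_le_det_one_add hB)
    exact ⟨RCLike.one_re (K := 𝕜) ▸ hre, him.symm.trans RCLike.one_im⟩
  obtain ⟨hAre, hAim⟩ := re_im hA
  obtain ⟨hCre, hCim⟩ := re_im hC
  obtain ⟨hACre, hACim⟩ := add_assoc 1 A C ▸ re_im (hA.add hC)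
  refine ⟨hAim, hCim, hACim, hAre, hCre, hACre, ?_⟩
  simpa only [RCLike.mul_re, hAim, zero_mul, sub_zero] using RCLike.re_le_re hle

end Subadditivity

/-- Subadditivity of `det(I + ·)` over positive semidefinite matrices:
`det(I + A + C) ≤ det(I + A) · det(I + C)`, where all three determinants are
real numbers `≥ 1`. -/
theorem det_one_add_add_le_mul (n : ℕ) (A C : Matrix (Fin n) (Fin n) ℂ)
    (hA : A.PosSemidef) (hC : C.PosSemidef) :
    (1 + A).det.im = 0 ∧ (1 + C).det.im = 0 ∧ (1 + A + C).det.im = 0 ∧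
    1 ≤ (1 + A).det.re ∧ 1 ≤ (1 + C).det.re ∧ 1 ≤ (1 + A + C).det.re ∧
    (1 + A + C).det.re ≤ (1 + A).det.re * (1 + C).det.re :=
  det_one_add_add_le_mul_general hA hC
end

section
/- Fix a matrix H ∈ ℂ^{m×n} and Hermitian positive semidefinite n×n matrices A and B with A − B positive semidefinite (i.e., A ⪰ B ⪰ 0). The function Q ↦ log det(I + H(A + Q)Hᴴ) − log det(I + H(B + Q)Hᴴ), viewed as a real-valued function on the convex set of n×n Hermitian positive semidefinite complex matrices, is convex. -/
open Matrix ComplexOrder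

/-!
Telescoping over a decomposition of `W ⪰ 0` into rank-one terms `w wᴴ` reduces the convexity of
`X ↦ log det (X + W) - log det X` to the case `W = w wᴴ`. With `Y = X + w wᴴ`, the matrix
determinant lemma gives `det X = det Y * (1 - wᴴ Y⁻¹ w)`, so that
`log det (X + w wᴴ) - log det X = - log (1 - wᴴ Y⁻¹ w)`.
Completing the square, `wᴴ Y⁻¹ w = max_v (2 Re (wᴴ v) - vᴴ Y v)`, attained at `v = Y⁻¹ w`. So
`Y ↦ wᴴ Y⁻¹ w` is a maximum of affine functions, hence convex, and `t ↦ - log (1 - t)` is convex and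
increasing for `t < 1`.
The problem at hand is the case `X = I + H (B + Q) Hᴴ`, `W = H (A - B) Hᴴ`.
-/

section ConcaveLog

variable {E : Type*} [AddCommMonoid E] [Module ℝ E] {s : Set E} {f : E → ℝ}

lemma concaveOn_log_comp (hf : ConcaveOn ℝ s f) (hpos : ∀ x ∈ s, 0 < f x) :
    ConcaveOn ℝ s fun x => Real.log (f x) := by
  refine ⟨hf.1, fun x hx y hy a b ha hb hab => ?_⟩
  have hmem := convex_Ioi (0 : ℝ) (hpos x hx) (hpos y hy) ha hb hab
  exact (strictConcaveOn_log_Ioi.concaveOn.2 (hpos x hx) (hpos y hy) ha hb hab).trans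
    (Real.log_le_log hmem (hf.2 hx hy ha hb hab))

end ConcaveLog

section LogDet

variable {𝕜 n : Type*} [RCLike 𝕜]

lemma convex_setOf_posSemidef : Convex ℝ {X : Matrix n n 𝕜 | X.PosSemidef} :=
  fun _ hX _ hY _ _ ha hb _ => (hX.smul ha).add (hY.smul hb)

lemma convex_setOf_posDef : Convex ℝ {X : Matrix n n 𝕜 | X.PosDef} :=
  convex_iff_forall_pos.2 fun _ hX _ hY _ _ ha hb _ => (hX.smul ha).add (hY.smul hb)

variable [Fintype n]

lemma re_star_dotProduct_comm (v w : n → 𝕜) :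
    RCLike.re (star v ⬝ᵥ w) = RCLike.re (star w ⬝ᵥ v) := by
  rw [← RCLike.conj_re, starRingEnd_apply, star_dotProduct, star_star]

variable [DecidableEq n]

lemma det_sub_vecMulVec {R : Type*} [CommRing R] {Y : Matrix n n R} (hY : IsUnit Y)
    (u v : n → R) : (Y - vecMulVec u v).det = Y.det * (1 - v ⬝ᵥ (Y⁻¹ *ᵥ u)) := by
  have h := det_add_replicateCol_mul_replicateRow (ι := Unit)
    ((isUnit_iff_isUnit_det Y).1 hY) (-u) v
  rw [← vecMulVec_eq, neg_vecMulVec, ← sub_eq_add_neg, Matrix.mul_assoc, ← replicateCol_mulVec,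
    det_unique (n := Unit)] at h
  simpa [mulVec_neg, ← sub_eq_add_neg] using h

lemma mulVec_inv_mulVec {R : Type*} [CommRing R] {Y : Matrix n n R} (hY : IsUnit Y) (w : n → R) :
    Y *ᵥ (Y⁻¹ *ᵥ w) = w := by
  rw [mulVec_mulVec, mul_nonsing_inv _ ((isUnit_iff_isUnit_det Y).1 hY), one_mulVec]

lemma star_inv_mulVec_dotProduct_mulVec {R : Type*} [CommRing R] [StarRing R] {Y : Matrix n n R}
    (hY : IsUnit Y) (hHerm : Y.IsHermitian) (w v : n → R) :
    star (Y⁻¹ *ᵥ w) ⬝ᵥ (Y *ᵥ v) = star w ⬝ᵥ v := by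
  rw [star_mulVec, hHerm.inv.eq, ← dotProduct_mulVec, mulVec_mulVec,
    nonsing_inv_mul _ ((isUnit_iff_isUnit_det Y).1 hY), one_mulVec]

/-- The matrix fractional function `Y ↦ wᴴ Y⁻¹ w`, as a real number. It governs rank-one updates of
the determinant; outside the invertible matrices it has the junk value `0`. -/
noncomputable def matrixFractional (w : n → 𝕜) (Y : Matrix n n 𝕜) : ℝ :=
  RCLike.re (star w ⬝ᵥ (Y⁻¹ *ᵥ w))

lemma re_quadForm_sub_inv_mulVec {Y : Matrix n n 𝕜} (hY : IsUnit Y) (hHerm : Y.IsHermitian)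
    (w v : n → 𝕜) :
    RCLike.re (star (v - Y⁻¹ *ᵥ w) ⬝ᵥ (Y *ᵥ (v - Y⁻¹ *ᵥ w))) =
      RCLike.re (star v ⬝ᵥ (Y *ᵥ v)) - 2 * RCLike.re (star w ⬝ᵥ v) + matrixFractional w Y := by
  simp only [star_sub, mulVec_sub, sub_dotProduct, dotProduct_sub,
    star_inv_mulVec_dotProduct_mulVec hY hHerm, mulVec_inv_mulVec hY, map_sub,
    re_star_dotProduct_comm v w, re_star_dotProduct_comm (Y⁻¹ *ᵥ w) w, matrixFractional]
  ring

lemma two_mul_re_sub_le_matrixFractional {Y : Matrix n n 𝕜} (hY : Y.PosDef) (w v : n → 𝕜) :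
    2 * RCLike.re (star w ⬝ᵥ v) - RCLike.re (star v ⬝ᵥ (Y *ᵥ v)) ≤ matrixFractional w Y := by
  have hnonneg := hY.posSemidef.re_dotProduct_nonneg (v - Y⁻¹ *ᵥ w)
  rw [re_quadForm_sub_inv_mulVec hY.isUnit hY.isHermitian] at hnonneg
  linarith

lemma matrixFractional_eq_two_mul_re_sub {Y : Matrix n n 𝕜} (hY : IsUnit Y) (w : n → 𝕜) :
    matrixFractional w Y = 2 * RCLike.re (star w ⬝ᵥ (Y⁻¹ *ᵥ w)) -
      RCLike.re (star (Y⁻¹ *ᵥ w) ⬝ᵥ (Y *ᵥ (Y⁻¹ *ᵥ w))) := by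
  rw [mulVec_inv_mulVec hY, re_star_dotProduct_comm _ w, matrixFractional]
  ring

lemma convexOn_matrixFractional (w : n → 𝕜) :
    ConvexOn ℝ {Y : Matrix n n 𝕜 | Y.PosDef} (matrixFractional w) := by
  refine ⟨convex_setOf_posDef, fun X hX Y hY a b ha hb hab => ?_⟩
  have hZ : (a • X + b • Y).PosDef := convex_setOf_posDef hX hY ha hb hab
  set v := (a • X + b • Y)⁻¹ *ᵥ w
  calc matrixFractional w (a • X + b • Y)
      = 2 * RCLike.re (star w ⬝ᵥ v) - RCLike.re (star v ⬝ᵥ ((a • X + b • Y) *ᵥ v)) :=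
        matrixFractional_eq_two_mul_re_sub hZ.isUnit w
    _ = a * (2 * RCLike.re (star w ⬝ᵥ v) - RCLike.re (star v ⬝ᵥ (X *ᵥ v))) +
          b * (2 * RCLike.re (star w ⬝ᵥ v) - RCLike.re (star v ⬝ᵥ (Y *ᵥ v))) := by
        simp only [add_mulVec, smul_mulVec, dotProduct_add, dotProduct_smul, map_add,
          RCLike.smul_re]
        linear_combination -(2 * RCLike.re (star w ⬝ᵥ v)) * hab
    _ ≤ a • matrixFractional w X + b • matrixFractional w Y := by
        simp only [smul_eq_mul]
        gcongr
        · exact two_mul_re_sub_le_matrixFractional hX w v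
        · exact two_mul_re_sub_le_matrixFractional hY w v

/-- `log det X`, as a real number: the logarithm of the real part of the determinant, which is the
determinant itself when `X` is Hermitian. -/
noncomputable def logDet (X : Matrix n n 𝕜) : ℝ :=
  Real.log (RCLike.re X.det)

lemma re_det_pos {X : Matrix n n 𝕜} (hX : X.PosDef) : 0 < RCLike.re X.det :=
  (RCLike.pos_iff.1 hX.det_pos).1

lemma re_det_eq_mul_one_sub_matrixFractional {X : Matrix n n 𝕜} (hX : X.PosDef) (w : n → 𝕜) :
    RCLike.re X.det = RCLike.re (X + vecMulVec w (star w)).det *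
      (1 - matrixFractional w (X + vecMulVec w (star w))) := by
  have hY := hX.add_posSemidef (posSemidef_vecMulVec_self_star w)
  have hdet := det_sub_vecMulVec hY.isUnit w (star w)
  rw [add_sub_cancel_right] at hdet
  rw [hdet, RCLike.mul_re, (RCLike.pos_iff.1 hY.det_pos).2, zero_mul, sub_zero, map_sub,
    RCLike.one_re, matrixFractional]

lemma matrixFractional_add_vecMulVec_lt_one {X : Matrix n n 𝕜} (hX : X.PosDef) (w : n → 𝕜) :
    matrixFractional w (X + vecMulVec w (star w)) < 1 := by
  have hY := hX.add_posSemidef (posSemidef_vecMulVec_self_star w)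
  have hprod := re_det_pos hX
  rw [re_det_eq_mul_one_sub_matrixFractional hX w] at hprod
  exact sub_pos.1 (pos_of_mul_pos_right hprod (re_det_pos hY).le)

lemma logDet_add_vecMulVec_sub_logDet {X : Matrix n n 𝕜} (hX : X.PosDef) (w : n → 𝕜) :
    logDet (X + vecMulVec w (star w)) - logDet X =
      -Real.log (1 - matrixFractional w (X + vecMulVec w (star w))) := by
  have hY := hX.add_posSemidef (posSemidef_vecMulVec_self_star w)
  have hlt := matrixFractional_add_vecMulVec_lt_one hX w
  rw [logDet, logDet, re_det_eq_mul_one_sub_matrixFractional hX w,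
    Real.log_mul (re_det_pos hY).ne' (sub_pos.2 hlt).ne']
  ring

lemma convexOn_logDet_add_vecMulVec_sub_logDet (w : n → 𝕜) :
    ConvexOn ℝ {X : Matrix n n 𝕜 | X.PosDef}
      fun X => logDet (X + vecMulVec w (star w)) - logDet X := by
  have hfrac : ConvexOn ℝ {X : Matrix n n 𝕜 | X.PosDef}
      fun X => matrixFractional w (X + vecMulVec w (star w)) :=
    ((convexOn_matrixFractional w).translate_left (vecMulVec w (star w))).subset
      (fun _ hX => PosDef.posSemidef_add (posSemidef_vecMulVec_self_star w) hX)
      convex_setOf_posDef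
  have hlog := concaveOn_log_comp ((concaveOn_const 1 convex_setOf_posDef).sub hfrac)
    fun X hX => sub_pos.2 (matrixFractional_add_vecMulVec_lt_one hX w)
  exact hlog.neg.congr fun X hX => (logDet_add_vecMulVec_sub_logDet hX w).symm

lemma convexOn_logDet_add_add_sub_logDet {V W : Matrix n n 𝕜} (hV : V.PosSemidef)
    (hVconv : ConvexOn ℝ {X : Matrix n n 𝕜 | X.PosDef} fun X => logDet (X + V) - logDet X)
    (hWconv : ConvexOn ℝ {X : Matrix n n 𝕜 | X.PosDef} fun X => logDet (X + W) - logDet X) :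
    ConvexOn ℝ {X : Matrix n n 𝕜 | X.PosDef} fun X => logDet (X + (V + W)) - logDet X := by
  have hshift := (hWconv.translate_left V).subset
    (fun _ hX => PosDef.posSemidef_add hV hX) convex_setOf_posDef
  refine (hshift.add hVconv).congr fun X _ => ?_
  simp only [Pi.add_apply, Function.comp_apply, add_assoc, sub_add_sub_cancel]

theorem convexOn_logDet_add_sub_logDet {W : Matrix n n 𝕜} (hW : W.PosSemidef) :
    ConvexOn ℝ {X : Matrix n n 𝕜 | X.PosDef} fun X => logDet (X + W) - logDet X := by
  obtain ⟨d, w, rfl⟩ := posSemidef_iff_eq_sum_vecMulVec.1 hW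
  let P (V : Matrix n n 𝕜) : Prop := V.PosSemidef ∧
    ConvexOn ℝ {X : Matrix n n 𝕜 | X.PosDef} fun X => logDet (X + V) - logDet X
  have hadd (U V : Matrix n n 𝕜) (hU : P U) (hV : P V) : P (U + V) :=
    ⟨hU.1.add hV.1, convexOn_logDet_add_add_sub_logDet hU.1 hU.2 hV.2⟩
  have hzero : P 0 :=
    ⟨.zero, by simpa only [add_zero, sub_self] using convexOn_const (0 : ℝ) convex_setOf_posDef⟩
  have hrankOne (i : Fin d) : P (vecMulVec (w i) (star (w i))) :=
    ⟨posSemidef_vecMulVec_self_star (w i), convexOn_logDet_add_vecMulVec_sub_logDet (w i)⟩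
  exact (Finset.sum_induction _ P hadd hzero fun i _ => hrankOne i).2

end LogDet

theorem logdet_difference_convex_on_psd_general {𝕜 m n : Type*} [RCLike 𝕜] [Fintype m]
    [DecidableEq m] [Fintype n] (H : Matrix m n 𝕜) (A B : Matrix n n 𝕜)
    (hAB : (H * (A - B) * Hᴴ).PosSemidef) :
    ConvexOn ℝ {Q : Matrix n n 𝕜 | (1 + H * (B + Q) * Hᴴ).PosDef}
      fun Q => logDet (1 + H * (A + Q) * Hᴴ) - logDet (1 + H * (B + Q) * Hᴴ) := by
  let L : Matrix n n 𝕜 →ₗ[ℝ] Matrix m m 𝕜 := mulRightLinearMap m ℝ Hᴴ ∘ₗ mulLeftLinearMap n ℝ H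
  have hL (P : Matrix n n 𝕜) : H * P * Hᴴ = L P := rfl
  have hX (Q : Matrix n n 𝕜) : 1 + L (B + Q) = 1 + L B + L Q := by rw [map_add, add_assoc]
  have hXW (Q : Matrix n n 𝕜) : 1 + L (A + Q) = 1 + L B + L Q + L (A - B) := by
    rw [map_add, map_sub]
    abel
  simp only [hL, hX, hXW] at hAB ⊢
  exact ((convexOn_logDet_add_sub_logDet hAB).translate_right (1 + L B)).comp_linearMap L

/-- For `A ⪰ B ⪰ 0`, the difference
`Q ↦ log det(I + H(A + Q)Hᴴ) − log det(I + H(B + Q)Hᴴ)` is convex on the convex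
set of Hermitian positive semidefinite matrices. -/
theorem logdet_difference_convex_on_psd (m n : ℕ) (H : Matrix (Fin m) (Fin n) ℂ)
    (A B : Matrix (Fin n) (Fin n) ℂ) (hA : A.PosSemidef) (hB : B.PosSemidef)
    (hAB : (A - B).PosSemidef) :
    ConvexOn ℝ {Q : Matrix (Fin n) (Fin n) ℂ | Q.PosSemidef}
      (fun Q => logdetI (H * (A + Q) * Hᴴ) - logdetI (H * (B + Q) * Hᴴ)) := by
  exact (logdet_difference_convex_on_psd_general H A B (hAB.mul_mul_conjTranspose_same H)).subset
    (fun _ hQ => PosDef.one.add_posSemidef ((hB.add hQ).mul_mul_conjTranspose_same H))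
    convex_setOf_posSemidef
end
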